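/- Let Ω ⊆ ℝ^n be nonempty and J : Ω → ℝ^p. If β ∈ ℝ^p satisfies β_i > 0 for all i and x* ∈ Ω minimizes λ ↦ ∑_{i=1}^p β_i J_i(λ) over Ω, then x* is properly Pareto efficient: there exists a convex cone C ⊆ ℝ^p with the nonnegative orthant ℝ^p_+ contained in the interior of C together with the origin, such that for every x' ∈ Ω with J(x*) − J(x') ∈ C one has J(x') = J(x*). -/

import Mathlib

/-- If `β i > 0` for all `i` and `x ∈ Ω` minimizes the scalarized
objective `λ ↦ ∑ i, β i * J i λ` over `Ω`, then `x` is properly Pareto efficient: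
there is a convex cone `C ⊆ ℝ^p` with the nonnegative orthant contained in
`interior C ∪ {0}` such that `J x - J x' ∈ C` forces `J x' = J x` for `x' ∈ Ω`. -/
theorem scalarization_pos_properly_pareto
    {n p : ℕ} (Ω : Set (Fin n → ℝ)) (hΩ : Ω.Nonempty)
    (J : (Fin n → ℝ) → Fin p → ℝ)
    (β : Fin p → ℝ) (hβ : ∀ i, 0 < β i)
    (x : Fin n → ℝ) (hx : x ∈ Ω)
    (hmin : ∀ x' ∈ Ω, ∑ i, β i * J x i ≤ ∑ i, β i * J x' i) :
    ∃ C : Set (Fin p → ℝ), Convex ℝ C ∧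
      (∀ c ∈ C, ∀ t : ℝ, 0 < t → t • c ∈ C) ∧
      {v : Fin p → ℝ | ∀ i, 0 ≤ v i} ⊆ interior C ∪ {0} ∧
      ∀ x' ∈ Ω, J x - J x' ∈ C → J x' = J x := by
  have hopen : IsOpen {v : Fin p → ℝ | 0 < ∑ i, β i * v i} :=
    isOpen_lt continuous_const (by fun_prop)
  refine ⟨{v | 0 < ∑ i, β i * v i}, ?_, ?_, ?_, ?_⟩
  · refine convex_halfSpace_gt (f := fun v : Fin p → ℝ => ∑ i, β i * v i) ⟨?_, ?_⟩ 0
    · intro u v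
      simp [mul_add, Finset.sum_add_distrib]
    · intro c v
      simp [Finset.mul_sum, mul_left_comm]
  · intro c hc t ht
    have h : ∑ i, β i * (t • c) i = t * ∑ i, β i * c i := by
      simp [Finset.mul_sum, mul_left_comm]
    simpa only [Set.mem_ofPred_eq, h] using mul_pos ht hc
  · intro v hv
    rw [hopen.interior_eq]
    by_cases h0 : v = 0
    · exact Or.inr h0
    · obtain ⟨j, hj⟩ := Function.ne_iff.mp h0
      exact Or.inl (Finset.sum_pos' (fun i _ => mul_nonneg (hβ i).le (hv i))
        ⟨j, Finset.mem_univ j, mul_pos (hβ j) (lt_of_le_of_ne (hv j) (Ne.symm hj))⟩)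
  · intro x' hx' hC
    have hlt : 0 < ∑ i, β i * J x i - ∑ i, β i * J x' i := by
      simpa [mul_sub, Finset.sum_sub_distrib] using hC
    linarith [hmin x' hx']
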